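/- Let w be a Kreweras word of length 3n. Then for every i ∈ {1,…,3n}: w_i = A if σ_w^{-1}(i) > i, and w_i = ε_w(σ_w^{-1}(i)) if σ_w^{-1}(i) < i. In other words, the pair (σ_w, ε_w) determines w. -/

import Mathlib

/-- The three letters of a Kreweras word. -/
inductive KLetter : Type
  | A | B | C
deriving DecidableEq, Repr

open KLetter

/-- `w` is a Kreweras word of length `3 * n`: it has `n` `A`'s, `n` `B`'s, `n` `C`'s,
and every prefix has at least as many `A`'s as `B`'s and at least as many `A`'s as `C`'s. -/
def IsKrewerasWord (n : ℕ) (w : List KLetter) : Prop :=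
  w.length = 3 * n ∧ w.count A = n ∧ w.count B = n ∧ w.count C = n ∧
  ∀ k : ℕ, (w.take k).count B ≤ (w.take k).count A ∧
           (w.take k).count C ≤ (w.take k).count A

/-- `kiota w` is the smallest index `ι ≥ 1` (1-indexed) such that the prefix of
length `ι` of `w` has equally many `A`'s as `B`'s, or equally many `A`'s as `C`'s
(and `0` if no such index exists). -/
def kiota (w : List KLetter) : ℕ :=
  (((List.range (w.length + 1)).filter fun k =>
      decide (1 ≤ k) &&
      (((w.take k).count A == (w.take k).count B) ||
       ((w.take k).count A == (w.take k).count C))).headD 0)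

/-- Promotion of a Kreweras word:
`pro w = (w₂, …, w_{ι-1}, A, w_{ι+1}, …, w_{3n}, w_ι)` where `ι = kiota w`. -/
def pro (w : List KLetter) : List KLetter :=
  ((w.drop 1).set (kiota w - 2) A) ++ [w.getD (kiota w - 1) A]

/-- The trip permutation `σ_w` of a Kreweras word of length `3 * n`, as a function on
1-indexed positions: `σ_w i` is the unique element of `{1, …, 3n}` congruent to
`kiota (pro^[i-1] w) + i - 1` modulo `3 * n`. -/
def ksigma (n : ℕ) (w : List KLetter) (i : ℕ) : ℕ :=
  (kiota (pro^[i - 1] w) + i - 2) % (3 * n) + 1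

/-- `keps w i` is the letter of `pro^[i-1] w` in (1-indexed) position `kiota (pro^[i-1] w)`. -/
def keps (w : List KLetter) (i : ℕ) : KLetter :=
  (pro^[i - 1] w).getD (kiota (pro^[i - 1] w) - 1) A

/-- The negation swapping `B` and `C` (and fixing `A`). -/
def negL : KLetter → KLetter
  | A => A
  | B => C
  | C => B

open Classical in
/-- The involution `τ_i` on Kreweras words of length `3 * n`: swap the letters in
(1-indexed) positions `i` and `i + 1` if the result is again a Kreweras word,
and otherwise do nothing. -/
noncomputable def tau (n i : ℕ) (w : List KLetter) : List KLetter :=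
  let w' := (w.set (i - 1) (w.getD i A)).set i (w.getD (i - 1) A)
  if IsKrewerasWord n w' then w' else w

/-- `tauDown n j = τ_j ∘ τ_{j-1} ∘ ⋯ ∘ τ_1`. -/
noncomputable def tauDown (n : ℕ) : ℕ → List KLetter → List KLetter
  | 0, w => w
  | j + 1, w => tau n (j + 1) (tauDown n j w)

/-- `evacAux n j = (tauDown n 1) ∘ (tauDown n 2) ∘ ⋯ ∘ (tauDown n j)`. -/
noncomputable def evacAux (n : ℕ) : ℕ → List KLetter → List KLetter
  | 0, w => w
  | j + 1, w => evacAux n j (tauDown n (j + 1) w)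

/-- Evacuation on Kreweras words of length `3 * n`:
`evac = (τ_1) ∘ (τ_2 ∘ τ_1) ∘ ⋯ ∘ (τ_{3n-1} ∘ ⋯ ∘ τ_2 ∘ τ_1)`. -/
noncomputable def evac (n : ℕ) (w : List KLetter) : List KLetter :=
  evacAux n (3 * n - 1) w

/-- `tauAsc n k c = τ_{k+c-1} ∘ ⋯ ∘ τ_{k+1} ∘ τ_k`. -/
noncomputable def tauAsc (n k : ℕ) : ℕ → List KLetter → List KLetter
  | 0, w => w
  | j + 1, w => tau n (k + j) (tauAsc n k j w)

/-- `evacStarAux n j = (tauAsc n 1 (3n-1)) ∘ (tauAsc n 2 (3n-2)) ∘ ⋯ ∘ (tauAsc n j (3n-j))`. -/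
noncomputable def evacStarAux (n : ℕ) : ℕ → List KLetter → List KLetter
  | 0, w => w
  | j + 1, w => evacStarAux n j (tauAsc n (j + 1) (3 * n - (j + 1)) w)

/-- Dual evacuation on Kreweras words of length `3 * n`:
`evac* = (τ_{3n-1} ∘ ⋯ ∘ τ_1) ∘ (τ_{3n-1} ∘ ⋯ ∘ τ_2) ∘ ⋯ ∘ (τ_{3n-1})`. -/
noncomputable def evacStar (n : ℕ) (w : List KLetter) : List KLetter :=
  evacStarAux n (3 * n - 1) w

/-- The three-element "V"-shaped poset: `a < b`, `a < c`, with `b`, `c` incomparable. -/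
inductive VP : Type
  | a | b | c
deriving DecidableEq

instance : PartialOrder VP where
  le x y := x = y ∨ x = VP.a
  le_refl x := Or.inl rfl
  le_trans x y z hxy hyz := by
    rcases hxy with rfl | rfl
    · exact hyz
    · exact Or.inr rfl
  le_antisymm x y hxy hyx := by
    rcases hxy with rfl | rfl
    · rfl
    · rcases hyx with rfl | rfl <;> rfl

/-- The labeling of elements of `V(n) = VP × Fin n` by letters. -/
def vlabel {n : ℕ} (p : VP × Fin n) : KLetter :=
  match p.1 with
  | VP.a => A
  | VP.b => B
  | VP.c => C

/-- `L` is a linear extension of `V(n) = VP × Fin n` (with the product order):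
a list of all elements of `V(n)`, each appearing once, such that `L_i ≤ L_j`
implies `i ≤ j`. -/
def IsLinearExtension (n : ℕ) (L : List (VP × Fin n)) : Prop :=
  L.Nodup ∧ (∀ p : VP × Fin n, p ∈ L) ∧
  ∀ i j : Fin L.length, L.get i ≤ L.get j → (i : ℕ) ≤ (j : ℕ)

/-- A connected Kreweras word: a Kreweras word of length `3 * n` having no proper
nonempty consecutive substring which is itself a Kreweras word. -/
def ConnectedKrewerasWord (n : ℕ) (w : List KLetter) : Prop :=
  IsKrewerasWord n w ∧
  ∀ (u : List KLetter) (m : ℕ), u <:+: w → u ≠ [] → u ≠ w → ¬ IsKrewerasWord m u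

namespace KTrip

/-- left ladder condition -/
def CL (r m : ℕ) (x y : ℕ → ℤ) (s : ℤ) : Prop :=
  ∃ p, r ≤ p ∧ p < m ∧ y p ≤ y m - s ∧ ∀ p', p < p' → p' < m → x m - s + 1 < x p'

/-- right ladder condition -/
def CR (e m : ℕ) (x y : ℕ → ℤ) (s : ℤ) : Prop :=
  ∃ p, m ≤ p ∧ p ≤ e ∧ x p ≤ x m - s ∧ ∀ p', m ≤ p' → p' ≤ p → y m - s < y p'

/-- the trip ends to the right at `q` -/
def TR (r e m q : ℕ) (x y : ℕ → ℤ) : Prop :=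
  ∃ t : ℤ, 1 ≤ t ∧ (∀ s, 1 ≤ s → s ≤ t → CL r m x y s) ∧ (∀ s, 1 ≤ s → s < t → CR e m x y s) ∧
    ¬ CR e m x y t ∧ m < q ∧ q ≤ e ∧ y q = y m - t ∧ ∀ p, m ≤ p → p < q → y m - t < y p

/-- the trip ends to the left at the opener `q + 1` -/
def TL (r e m q : ℕ) (x y : ℕ → ℤ) : Prop :=
  ∃ t : ℤ, 1 ≤ t ∧ (∀ s, 1 ≤ s → s < t → CL r m x y s) ∧ (∀ s, 1 ≤ s → s < t → CR e m x y s) ∧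
    ¬ CL r m x y t ∧ r ≤ q ∧ q < m ∧ x q = x m - t + 1 ∧
    ∀ p, q < p → p < m → x m - t + 1 < x p

/-- the trip from a letter `A` at `m` ends at `q` -/
def TA (e m q : ℕ) (x y : ℕ → ℤ) : Prop :=
  m < q ∧ q ≤ e ∧ (x q = x m - 1 ∨ y q = y m - 1) ∧
    (∀ p, m ≤ p → p < q → x m ≤ x p ∧ y m ≤ y p)

structure Row (r e : ℕ) (x y : ℕ → ℤ) : Prop where
  x0 : x r = 0
  y0 : y r = 0
  x1 : x e = 0
  y1 : y e = 0
  nn : ∀ p, r ≤ p → p ≤ e → 0 ≤ x p ∧ 0 ≤ y p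
  st : ∀ p, r ≤ p → p < e → (x (p+1) = x p + 1 ∧ y (p+1) = y p + 1) ∨
    (x (p+1) = x p - 1 ∧ y (p+1) = y p) ∨ (x (p+1) = x p ∧ y (p+1) = y p - 1)

structure Hit (r e h : ℕ) (x y x' y' : ℕ → ℤ) : Prop where
  h1 : r + 1 < h
  h2 : h ≤ e
  xh : x h = 0
  yh : 1 ≤ y h
  xp : x (h - 1) = 1
  yp : y (h - 1) = y h
  pos : ∀ p, r < p → p < h → 1 ≤ x p ∧ 1 ≤ y p
  bef : ∀ p, r < p → p < h → x' p = x p - 1 ∧ y' p = y p - 1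
  aft : ∀ p, h ≤ p → p ≤ e → x' p = x p + 1 ∧ y' p = y p
  xe : x' (e + 1) = 0
  ye : y' (e + 1) = 0
  xf : x (r + 1) = 1
  yf : y (r + 1) = 1

section
variable {r e h m q : ℕ} {x y x' y' : ℕ → ℤ}

theorem CL_bd (R : Row r e x y) (hm : m ≤ e) {s : ℤ} (H : CL r m x y s) : s ≤ y m := by
  obtain ⟨p, a, b, c, d⟩ := H
  have := R.nn p a (by omega)
  omega

theorem CR_bd (R : Row r e x y) (hm : r ≤ m) {s : ℤ} (H : CR e m x y s) : s ≤ x m := by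
  obtain ⟨p, a, b, c, d⟩ := H
  have := R.nn p (by omega) (by omega)
  omega

-- Case 1 : the hit is to the right of m, of the same type
theorem c1_CL' (H : Hit r e h x y x' y') (hm : r + 1 < m) (hh : m < h) {s : ℤ}
    (c : CL (r+1) m x' y' s) : CL r m x y s := by
  obtain ⟨p, a, b, c, d⟩ := c
  have hm' := H.bef m (by omega) hh
  have hp' := H.bef p (by omega) (by omega)
  refine ⟨p, by omega, b, by omega, fun p' u v => ?_⟩
  have := H.bef p' (by omega) (by omega)
  have := d p' u v
  omega

theorem c1_CL (R : Row r e x y) (H : Hit r e h x y x' y') (hm : r + 1 < m) (hh : m < h) {s : ℤ}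
    (c : CL r m x y s) (hs : s ≤ x m) : CL (r+1) m x' y' s := by
  obtain ⟨p, a, b, c, d⟩ := c
  have hm' := H.bef m (by omega) hh
  have hpr : p ≠ r := by
    rintro rfl
    have := d (p+1) (by omega) (by omega)
    have := H.xf
    omega
  have hp' := H.bef p (by omega) (by omega)
  refine ⟨p, by omega, b, by omega, fun p' u v => ?_⟩
  have := H.bef p' (by omega) (by omega)
  have := d p' u v
  omega

theorem c1_CR (R : Row r e x y) (H : Hit r e h x y x' y') (hm : r + 1 < m) (hh : m < h) {s : ℤ}
    (c : CR e m x y s) (hs : s ≤ x m - 1) : CR (e+1) m x' y' s := by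
  obtain ⟨p, a, b, c, d⟩ := c
  have hm' := H.bef m (by omega) hh
  have h2 := H.h2
  by_cases hp : p < h
  · have hp' := H.bef p (by omega) (by omega)
    refine ⟨p, by omega, by omega, by omega, fun p' u v => ?_⟩
    have := H.bef p' (by omega) (by omega)
    have := d p' u v
    omega
  · have hp' := H.bef (h-1) (by omega) (by omega)
    have := H.xp
    refine ⟨h-1, by omega, by omega, by omega, fun p' u v => ?_⟩
    have := H.bef p' (by omega) (by omega)
    have := d p' u (by omega)
    omega

theorem c1_CR' (R : Row r e x y) (H : Hit r e h x y x' y') (hm : r + 1 < m) (hh : m < h) {s : ℤ}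
    (c : CR (e+1) m x' y' s) (hs : s ≤ x m - 1) : CR e m x y s := by
  obtain ⟨p, a, b, c, d⟩ := c
  have hm' := H.bef m (by omega) hh
  have h2 := H.h2
  by_cases hp : p < h
  · have hp' := H.bef p (by omega) (by omega)
    refine ⟨p, by omega, by omega, by omega, fun p' u v => ?_⟩
    have := H.bef p' (by omega) (by omega)
    have := d p' u v
    omega
  · have hp' := H.bef (h-1) (by omega) (by omega)
    have := H.xp
    refine ⟨h-1, by omega, by omega, by omega, fun p' u v => ?_⟩
    have := H.bef p' (by omega) (by omega)
    have := d p' u (by omega)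
    omega

theorem c1_TR (R : Row r e x y) (R' : Row (r+1) (e+1) x' y') (H : Hit r e h x y x' y')
    (hm : r + 1 < m) (hh : m < h)
    (T : TR r e m q x y) : TR (r+1) (e+1) m q x' y' := by
  obtain ⟨t, t1, cl, cr, ncr, mq, qe, yq, fq⟩ := T
  have hm' := H.bef m (by omega) hh
  have hmp := H.pos m (by omega) hh
  have h2 := H.h2
  have nCR' : ¬ CR (e+1) m x' y' (x m) := fun c => by
    have := CR_bd R' (by omega) c
    omega
  by_cases ht : t ≤ x m
  · have hq : q < h := by
      by_contra hq
      by_cases ht2 : t ≤ x m - 1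
      · have := H.xp
        exact ncr ⟨h-1, by omega, by omega, by omega, fun p' u v => fq p' u (by omega)⟩
      · have := H.xh
        have := H.yp
        have := fq (h-1) (by omega) (by omega)
        refine ncr ⟨h, by omega, by omega, by omega, fun p' u v => ?_⟩
        by_cases hp : p' = h
        · subst hp; omega
        · exact fq p' u (by omega)
    have hq' := H.bef q (by omega) hq
    refine ⟨t, t1, fun s a b => c1_CL R H hm hh (cl s a b) (by omega),
      fun s a b => c1_CR R H hm hh (cr s a b) (by omega), ?_, mq, by omega, by omega, ?_⟩
    · by_cases ht2 : t ≤ x m - 1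
      · exact fun c => ncr (c1_CR' R H hm hh c ht2)
      · have : t = x m := by omega
        rw [this]; exact nCR'
    · intro p a b
      have := H.bef p (by omega) (by omega)
      have := fq p a b
      omega
  · have c0 := cr (t-1) (by omega) (by omega)
    have b0 := CR_bd R (by omega) c0
    have ht2 : t = x m + 1 := by omega
    obtain ⟨p, a, b, c, d⟩ := c0
    have hp : h ≤ p := by
      by_contra hp
      have := H.pos p (by omega) (by omega)
      omega
    have hq : h < q := by
      by_contra hq
      have := d q (by omega) (by omega)
      omega
    have hq' := H.aft q (by omega) (by omega)
    refine ⟨x m, by omega, fun s a b => c1_CL R H hm hh (cl s a (by omega)) b,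
      fun s a b => c1_CR R H hm hh (cr s a (by omega)) (by omega), nCR', mq, by omega, by omega, ?_⟩
    intro z u v
    by_cases hz : z < h
    · have := H.bef z (by omega) hz
      have := d z u (by omega)
      omega
    · have := H.aft z (by omega) (by omega)
      have := fq z u v
      omega

theorem c1_TL (R : Row r e x y) (H : Hit r e h x y x' y')
    (hm : r + 1 < m) (hh : m < h)
    (T : TL r e m q x y) : TL (r+1) (e+1) m q x' y' := by
  obtain ⟨t, t1, cl, cr, ncl, rq, qm, xq, fq⟩ := T
  have hm' := H.bef m (by omega) hh
  have hmp := H.pos m (by omega) hh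
  have h2 := H.h2
  have ht : t ≤ x m := by
    by_contra ht
    have b0 := CR_bd R (by omega) (cr (t-1) (by omega) (by omega))
    have ht2 : t = x m + 1 := by omega
    obtain ⟨p, a, b, c, d⟩ := cl (t-1) (by omega) (by omega)
    have hp : p ≠ r := by
      rintro rfl
      have := d (p+1) (by omega) (by omega)
      have := H.xf
      omega
    have := H.pos p (by omega) (by omega)
    have := R.y0
    refine ncl ⟨r, le_rfl, by omega, by omega, fun p' u v => ?_⟩
    have := H.pos p' (by omega) (by omega)
    omega
  have hqr : q ≠ r := by
    rintro rfl
    have := R.x0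
    omega
  have hq' := H.bef q (by omega) (by omega)
  refine ⟨t, t1, fun s a b => c1_CL R H hm hh (cl s a b) (by omega),
      fun s a b => c1_CR R H hm hh (cr s a b) (by omega), fun c => ncl (c1_CL' H hm hh c),
      by omega, qm, by omega, fun p a b => ?_⟩
  have := H.bef p (by omega) (by omega)
  have := fq p a b
  omega

-- Case 2 : the hit is to the right of m, of the other type
theorem c2_CL' (H : Hit r e h y x y' x') (hm : r + 1 < m) (hh : m < h) {s : ℤ}
    (c : CL (r+1) m x' y' s) : CL r m x y s := by
  obtain ⟨p, a, b, c, d⟩ := c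
  have hm' := H.bef m (by omega) hh
  have hp' := H.bef p (by omega) (by omega)
  refine ⟨p, by omega, b, by omega, fun p' u v => ?_⟩
  have := H.bef p' (by omega) (by omega)
  have := d p' u v
  omega

theorem c2_CL (H : Hit r e h y x y' x') (hm : r + 1 < m) (hh : m < h) {s : ℤ}
    (c : CL r m x y s) (hs : s ≤ x m) : CL (r+1) m x' y' s := by
  obtain ⟨p, a, b, c, d⟩ := c
  have hm' := H.bef m (by omega) hh
  have hpr : p ≠ r := by
    rintro rfl
    have := d (p+1) (by omega) (by omega)
    have := H.yf
    omega
  have hp' := H.bef p (by omega) (by omega)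
  refine ⟨p, by omega, b, by omega, fun p' u v => ?_⟩
  have := H.bef p' (by omega) (by omega)
  have := d p' u v
  omega

theorem c2_CRlt (H : Hit r e h y x y' x') (hm : r + 1 < m) (hh : m < h) {s : ℤ}
    (c : CR e m x y s) (hs : s ≤ y m - 1) : s ≤ x m - 1 := by
  obtain ⟨p, a, b, c, d⟩ := c
  have hp : p < h - 1 := by
    by_contra hp
    have := d (h-1) (by omega) (by omega)
    have := H.xp
    omega
  have := H.pos p (by omega) (by omega)
  omega

theorem c2_CR (H : Hit r e h y x y' x') (hm : r + 1 < m) (hh : m < h) {s : ℤ}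
    (c : CR e m x y s) (hs : s ≤ y m - 1) : CR (e+1) m x' y' s := by
  obtain ⟨p, a, b, c, d⟩ := c
  have hm' := H.bef m (by omega) hh
  have h2 := H.h2
  have hp : p < h - 1 := by
    by_contra hp
    have := d (h-1) (by omega) (by omega)
    have := H.xp
    omega
  have hp' := H.bef p (by omega) (by omega)
  refine ⟨p, by omega, by omega, by omega, fun p' u v => ?_⟩
  have := H.bef p' (by omega) (by omega)
  have := d p' u v
  omega

theorem c2_CR' (H : Hit r e h y x y' x') (hm : r + 1 < m) (hh : m < h) {s : ℤ}
    (c : CR (e+1) m x' y' s) (hs : s ≤ y m - 1) : CR e m x y s := by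
  obtain ⟨p, a, b, c, d⟩ := c
  have hm' := H.bef m (by omega) hh
  have h2 := H.h2
  have hp : p < h - 1 := by
    by_contra hp
    have := d (h-1) (by omega) (by omega)
    have := H.bef (h-1) (by omega) (by omega)
    have := H.xp
    omega
  have hp' := H.bef p (by omega) (by omega)
  refine ⟨p, by omega, by omega, by omega, fun p' u v => ?_⟩
  have := H.bef p' (by omega) (by omega)
  have := d p' u v
  omega

theorem c2_CLtop (R : Row r e x y) (H : Hit r e h y x y' x') (hm : r + 1 < m) (hh : m < h)
    (c : CL r m x y (y m)) : x m < y m := by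
  obtain ⟨p, a, b, c, d⟩ := c
  have hp : p = r := by
    by_contra hp
    have := H.pos p (by omega) (by omega)
    omega
  subst hp
  have := d (p+1) (by omega) (by omega)
  have := H.yf
  omega

theorem c2_TR (R : Row r e x y) (H : Hit r e h y x y' x')
    (hm : r + 1 < m) (hh : m < h)
    (T : TR r e m q x y) : TR (r+1) (e+1) m q x' y' := by
  obtain ⟨t, t1, cl, cr, ncr, mq, qe, yq, fq⟩ := T
  have hm' := H.bef m (by omega) hh
  have hmp := H.pos m (by omega) hh
  have h2 := H.h2
  have ht : t ≤ y m := CL_bd R (by omega) (cl t t1 le_rfl)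
  have hty : t ≠ y m := by
    rintro rfl
    have a1 := c2_CLtop R H hm hh (cl _ t1 le_rfl)
    have := c2_CRlt H hm hh (cr (y m - 1) (by omega) (by omega)) (by omega)
    omega
  have htx : t ≤ x m := by
    by_contra ht
    have := c2_CRlt H hm hh (cr (t - 1) (by omega) (by omega)) (by omega)
    omega
  have hq : q < h := by
    by_contra hq
    have := fq (h-1) (by omega) (by omega)
    have := H.xp
    omega
  have hq' := H.bef q (by omega) hq
  refine ⟨t, t1, fun s a b => c2_CL H hm hh (cl s a b) (by omega),
      fun s a b => c2_CR H hm hh (cr s a b) (by omega),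
      fun c => ncr (c2_CR' H hm hh c (by omega)), mq, by omega, by omega, ?_⟩
  intro p a b
  have := H.bef p (by omega) (by omega)
  have := fq p a b
  omega

theorem c2_TL (R : Row r e x y) (H : Hit r e h y x y' x')
    (hm : r + 1 < m) (hh : m < h)
    (T : TL r e m q x y) : TL (r+1) (e+1) m q x' y' := by
  obtain ⟨t, t1, cl, cr, ncl, rq, qm, xq, fq⟩ := T
  have hm' := H.bef m (by omega) hh
  have hmp := H.pos m (by omega) hh
  have h2 := H.h2
  have hty : t ≤ y m := by
    by_contra ht
    have c := cl (y m) (by omega) (by omega)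
    have := c2_CLtop R H hm hh c
    have := CR_bd R (by omega) (cr (y m) (by omega) (by omega))
    omega
  have htx : t ≤ x m := by
    by_contra ht
    have := c2_CRlt H hm hh (cr (t - 1) (by omega) (by omega)) (by omega)
    omega
  have hqr : q ≠ r := by
    rintro rfl
    have := R.x0
    omega
  have hq' := H.bef q (by omega) (by omega)
  refine ⟨t, t1, fun s a b => c2_CL H hm hh (cl s a b) (by omega),
      fun s a b => c2_CR H hm hh (cr s a b) (by omega), fun c => ncl (c2_CL' H hm hh c),
      by omega, qm, by omega, fun p a b => ?_⟩
  have := H.bef p (by omega) (by omega)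
  have := fq p a b
  omega

-- Case 3 : the hit is to the left of m, of the same type
theorem c3_CL (R : Row r e x y) (H : Hit r e h x y x' y') (hm : h < m) (me : m ≤ e) {s : ℤ}
    (hs : s ≤ x m + 1) : CL r m x y s ↔ CL (r+1) m x' y' s := by
  have hm' := H.aft m (by omega) me
  have hh' := H.aft h (by omega) (by omega)
  have := H.xh
  have := H.h1
  constructor
  · rintro ⟨p, a, b, c, d⟩
    have hp : h ≤ p := by
      by_contra hp
      have := d h (by omega) hm
      omega
    have hp' := H.aft p (by omega) (by omega)
    refine ⟨p, by omega, by omega, by omega, fun p' u v => ?_⟩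
    have := H.aft p' (by omega) (by omega)
    have := d p' u v
    omega
  · rintro ⟨p, a, b, c, d⟩
    have hp : h ≤ p := by
      by_contra hp
      have := d h (by omega) hm
      omega
    have hp' := H.aft p (by omega) (by omega)
    refine ⟨p, by omega, by omega, by omega, fun p' u v => ?_⟩
    have := H.aft p' (by omega) (by omega)
    have := d p' u v
    omega

theorem c3_CR (R : Row r e x y) (H : Hit r e h x y x' y') (hm : h < m) (me : m ≤ e) {s : ℤ}
    (hs : s ≤ x m) : CR e m x y s ↔ CR (e+1) m x' y' s := by
  have hm' := H.aft m (by omega) me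
  constructor
  · rintro ⟨p, a, b, c, d⟩
    have hp' := H.aft p (by omega) (by omega)
    refine ⟨p, by omega, by omega, by omega, fun p' u v => ?_⟩
    have := H.aft p' (by omega) (by omega)
    have := d p' u v
    omega
  · rintro ⟨p, a, b, c, d⟩
    by_cases hp : p ≤ e
    · have hp' := H.aft p (by omega) (by omega)
      refine ⟨p, by omega, by omega, by omega, fun p' u v => ?_⟩
      have := H.aft p' (by omega) (by omega)
      have := d p' u v
      omega
    · have := R.x1
      refine ⟨e, by omega, by omega, by omega, fun p' u v => ?_⟩
      have := H.aft p' (by omega) (by omega)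
      have := d p' u (by omega)
      omega

theorem c3_TR (R : Row r e x y) (H : Hit r e h x y x' y')
    (hm : h < m) (me : m ≤ e)
    (T : TR r e m q x y) : TR (r+1) (e+1) m q x' y' := by
  obtain ⟨t, t1, cl, cr, ncr, mq, qe, yq, fq⟩ := T
  have hm' := H.aft m (by omega) me
  have h1 := H.h1
  have hmp := R.nn m (by omega) me
  have hq' := H.aft q (by omega) (by omega)
  have ht : t ≤ x m + 1 := by
    by_contra ht
    have := CR_bd R (by omega) (cr (t-1) (by omega) (by omega))
    omega
  have hty := CL_bd R me (cl t t1 le_rfl)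
  refine ⟨t, t1, fun s a b => (c3_CL R H hm me (by omega)).1 (cl s a b),
      fun s a b => (c3_CR R H hm me (by omega)).1 (cr s a b), ?_, mq, by omega, by omega, ?_⟩
  · by_cases ht2 : t ≤ x m
    · exact fun c => ncr ((c3_CR R H hm me (by omega)).2 c)
    · rintro ⟨p, a, b, c, d⟩
      by_cases hp : p ≤ e
      · have := H.aft p (by omega) hp
        have := R.nn p (by omega) hp
        omega
      · have := d e me (by omega)
        have := H.aft e (by omega) le_rfl
        have := R.y1
        omega
  · intro p a b
    have := H.aft p (by omega) (by omega)
    have := fq p a b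
    omega

theorem c3_TL (R : Row r e x y) (H : Hit r e h x y x' y')
    (hm : h < m) (me : m ≤ e)
    (T : TL r e m q x y) : TL (r+1) (e+1) m q x' y' := by
  obtain ⟨t, t1, cl, cr, ncl, rq, qm, xq, fq⟩ := T
  have hm' := H.aft m (by omega) me
  have h1 := H.h1
  have hmp := R.nn m (by omega) me
  have ht : t ≤ x m + 1 := by
    by_contra ht
    have := CR_bd R (by omega) (cr (t-1) (by omega) (by omega))
    omega
  have hq : h ≤ q := by
    by_contra hq
    have := fq h (by omega) hm
    have := H.xh
    omega
  have hq' := H.aft q (by omega) (by omega)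
  refine ⟨t, t1, fun s a b => (c3_CL R H hm me (by omega)).1 (cl s a b),
      fun s a b => (c3_CR R H hm me (by omega)).1 (cr s a b),
      fun c => ncl ((c3_CL R H hm me (by omega)).2 c), by omega, by omega, by omega, ?_⟩
  intro p a b
  have := H.aft p (by omega) (by omega)
  have := fq p a b
  omega

-- Case 4 : the hit is to the left of m, of the other type
theorem c4_CR (R : Row r e x y) (H : Hit r e h y x y' x') (hm : h < m) (me : m ≤ e) {s : ℤ} :
    CR e m x y s ↔ CR (e+1) m x' y' s := by
  have hm' := H.aft m (by omega) me
  constructor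
  · rintro ⟨p, a, b, c, d⟩
    have hp' := H.aft p (by omega) (by omega)
    refine ⟨p, by omega, by omega, by omega, fun p' u v => ?_⟩
    have := H.aft p' (by omega) (by omega)
    have := d p' u v
    omega
  · rintro ⟨p, a, b, c, d⟩
    by_cases hp : p ≤ e
    · have hp' := H.aft p (by omega) (by omega)
      refine ⟨p, by omega, by omega, by omega, fun p' u v => ?_⟩
      have := H.aft p' (by omega) (by omega)
      have := d p' u v
      omega
    · have := R.x1
      have hpe : p = e + 1 := by omega
      subst hpe
      have := H.ye
      refine ⟨e, by omega, by omega, by omega, fun p' u v => ?_⟩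
      have := H.aft p' (by omega) (by omega)
      have := d p' u (by omega)
      omega

theorem c4_CL (H : Hit r e h y x y' x') (hm : h < m) (me : m ≤ e) {s : ℤ}
    (hs : s ≤ y m) : CL r m x y s ↔ CL (r+1) m x' y' s := by
  have hm' := H.aft m (by omega) me
  have hh' := H.aft h (by omega) (by omega)
  have := H.xh
  have := H.h1
  constructor
  · rintro ⟨p, a, b, c, d⟩
    by_cases hp : h ≤ p
    · have hp' := H.aft p (by omega) (by omega)
      refine ⟨p, by omega, by omega, by omega, fun p' u v => ?_⟩
      have := H.aft p' (by omega) (by omega)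
      have := d p' u v
      omega
    · refine ⟨h, by omega, by omega, by omega, fun p' u v => ?_⟩
      have := H.aft p' (by omega) (by omega)
      have := d p' (by omega) v
      omega
  · rintro ⟨p, a, b, c, d⟩
    by_cases hp : h ≤ p
    · have hp' := H.aft p (by omega) (by omega)
      refine ⟨p, by omega, by omega, by omega, fun p' u v => ?_⟩
      have := H.aft p' (by omega) (by omega)
      have := d p' u v
      omega
    · refine ⟨h, by omega, by omega, by omega, fun p' u v => ?_⟩
      have := H.aft p' (by omega) (by omega)
      have := d p' (by omega) v
      omega

theorem c4_TR (R : Row r e x y) (H : Hit r e h y x y' x')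
    (hm : h < m) (me : m ≤ e)
    (T : TR r e m q x y) : TR (r+1) (e+1) m q x' y' := by
  obtain ⟨t, t1, cl, cr, ncr, mq, qe, yq, fq⟩ := T
  have hm' := H.aft m (by omega) me
  have h1 := H.h1
  have hq' := H.aft q (by omega) (by omega)
  have hty := CL_bd R me (cl t t1 le_rfl)
  refine ⟨t, t1, fun s a b => (c4_CL H hm me (by omega)).1 (cl s a b),
      fun s a b => (c4_CR R H hm me).1 (cr s a b), fun c => ncr ((c4_CR R H hm me).2 c),
      mq, by omega, by omega, ?_⟩
  intro p a b
  have := H.aft p (by omega) (by omega)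
  have := fq p a b
  omega

theorem c4_TL (R : Row r e x y) (R' : Row (r+1) (e+1) x' y') (H : Hit r e h y x y' x')
    (hm : h < m) (me : m ≤ e)
    (T : TL r e m q x y) : TL (r+1) (e+1) m q x' y' ∨ (q = r ∧ TR (r+1) (e+1) m (e+1) x' y') := by
  obtain ⟨t, t1, cl, cr, ncl, rq, qm, xq, fq⟩ := T
  have hm' := H.aft m (by omega) me
  have h1 := H.h1
  have hmp := R.nn m (by omega) me
  have hyh := H.xh
  have ht : t ≤ y m + 1 := by
    by_contra ht
    have := CL_bd R me (cl (t-1) (by omega) (by omega))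
    omega
  have cl' : ∀ s, 1 ≤ s → s < t → CL (r+1) m x' y' s := fun s a b =>
    (c4_CL H hm me (by omega)).1 (cl s a b)
  have cr' : ∀ s, 1 ≤ s → s < t → CR (e+1) m x' y' s := fun s a b =>
    (c4_CR R H hm me).1 (cr s a b)
  by_cases hq : h ≤ q
  · left
    have hq' := H.aft q (by omega) (by omega)
    refine ⟨t, t1, cl', cr', ?_, by omega, by omega, by omega, ?_⟩
    · by_cases ht2 : t ≤ y m
      · exact fun c => ncl ((c4_CL H hm me ht2).2 c)
      · rintro ⟨p, a, b, c, d⟩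
        by_cases hp : h ≤ p
        · have := H.aft p hp (by omega)
          have := R.nn p (by omega) (by omega)
          omega
        · have := d q (by omega) (by omega)
          omega
    · intro p a b
      have := H.aft p (by omega) (by omega)
      have := fq p a b
      omega
  · have ht2 : t = y m + 1 := by
      by_contra ht2
      exact ncl ⟨h, by omega, hm, by omega, fun p' u v => by
        have := fq p' (by omega) v
        omega⟩
    subst ht2
    have clt : CL (r+1) m x' y' (y m + 1) := by
      have := H.bef (h-1) (by omega) (by omega)
      have := H.xp
      refine ⟨h-1, by omega, by omega, by omega, fun p' u v => ?_⟩
      have := H.aft p' (by omega) (by omega)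
      have := fq p' (by omega) v
      omega
    have hyx : y m ≤ x m := by
      by_contra hc
      have := CR_bd R (by omega) (cr (y m) (by omega) (by omega))
      omega
    by_cases hxy : y m + 1 ≤ x m
    · left
      have hqr : q ≠ r := by
        rintro rfl
        have := R.x0
        omega
      have hq' := H.bef q (by omega) (by omega)
      refine ⟨y m + 2, by omega, fun s a b => ?_, fun s a b => ?_, fun c => ?_, by omega, by omega,
        by omega, fun p a b => ?_⟩
      · by_cases hs : s = y m + 1
        · subst hs; exact clt
        · exact cl' s a (by omega)
      · by_cases hs : s = y m + 1
        · subst hs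
          refine (c4_CR R H hm me).1 ⟨e, by omega, le_rfl, ?_, fun p' u v => ?_⟩
          · have := R.x1
            omega
          · have := R.nn p' (by omega) v
            omega
        · exact cr' s a (by omega)
      · have := CL_bd R' (by omega) c
        omega
      · have := fq p a b
        by_cases hp : p < h
        · have := H.bef p (by omega) hp
          omega
        · have := H.aft p (by omega) (by omega)
          omega
    · right
      have hqr : q = r := by
        by_contra hqr
        have := H.pos q (by omega) (by omega)
        omega
      have := H.xe
      refine ⟨hqr, y m + 1, t1, fun s a b => ?_, cr', fun c => ?_, by omega, le_rfl, by omega,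
        fun p a b => ?_⟩
      · by_cases hs : s = y m + 1
        · subst hs; exact clt
        · exact cl' s a (by omega)
      · have := CR_bd R' (by omega) c
        omega
      · have := H.aft p (by omega) (by omega)
        have := R.nn p (by omega) (by omega)
        omega

-- the hit at m
theorem c5_TL (R : Row r e x y) (H : Hit r e m x y x' y') (T : TL r e m q x y) : False := by
  obtain ⟨t, t1, cl, cr, ncl, rq, qm, xq, fq⟩ := T
  have h1 := H.h1
  have hx := H.xh
  have hy := H.yh
  have ht : t = 1 := by
    by_contra ht
    have := CR_bd R (by omega) (cr 1 le_rfl (by omega))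
    omega
  subst ht
  have := R.y0
  refine ncl ⟨r, le_rfl, by omega, by omega, fun p' u v => ?_⟩
  have := H.pos p' (by omega) (by omega)
  omega

theorem c5_TR (R : Row r e x y) (H : Hit r e m x y x' y') (T : TR r e m q x y) :
    TA (e+1) m q x' y' := by
  obtain ⟨t, t1, cl, cr, ncr, mq, qe, yq, fq⟩ := T
  have h1 := H.h1
  have hx := H.xh
  have hy := H.yh
  have ht : t = 1 := by
    by_contra ht
    have := CR_bd R (by omega) (cr 1 le_rfl (by omega))
    omega
  subst ht
  have hm' := H.aft m (by omega) (by omega)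
  have hq' := H.aft q (by omega) (by omega)
  refine ⟨mq, by omega, by omega, fun p a b => ?_⟩
  have := H.aft p a (by omega)
  have := fq p a b
  have := R.nn p (by omega) (by omega)
  omega

theorem cA (R : Row r e x y) (H : Hit r e h x y x' y') (hm : r + 1 < m) (me : m ≤ e)
    (ha : x m = x (m-1) + 1) (ha2 : y m = y (m-1) + 1) (T : TA e m q x y) :
    TA (e+1) m q x' y' := by
  obtain ⟨mq, qe, dq, fq⟩ := T
  have h1 := H.h1
  have hx := H.xh
  have hxp := H.xp
  rcases lt_trichotomy h m with hh | hh | hh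
  · have hm' := H.aft m (by omega) (by omega)
    have hq' := H.aft q (by omega) (by omega)
    refine ⟨mq, by omega, by omega, fun p a b => ?_⟩
    have := H.aft p (by omega) (by omega)
    have := fq p a b
    omega
  · subst hh
    omega
  · have hm' := H.bef m (by omega) (by omega)
    have hmp := H.pos (m-1) (by omega) (by omega)
    have hq : q < h := by
      by_contra hq
      by_cases hqh : q = h
      · subst hqh
        have := H.yp
        have := fq (q-1) (by omega) (by omega)
        omega
      · have := fq h (by omega) (by omega)
        omega
    have hq' := H.bef q (by omega) (by omega)
    refine ⟨mq, by omega, by omega, fun p a b => ?_⟩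
    have := H.bef p (by omega) (by omega)
    have := fq p a b
    omega

theorem TA_symm (T : TA e m q x y) : TA e m q y x := by
  obtain ⟨a, b, c, d⟩ := T
  exact ⟨a, b, c.symm, fun p u v => (d p u v).symm⟩

end

end KTrip

namespace KTrip
section
variable {r e h m q N : ℕ} {x y x' y' : ℕ → ℤ}

theorem Row.symm (R : Row r e x y) : Row r e y x :=
  ⟨R.y0, R.x0, R.y1, R.x1, fun p a b => (R.nn p a b).symm, fun p a b => by
    have := R.st p a b
    omega⟩

theorem last_le (z : ℕ → ℤ) (v : ℤ) (hrm : r < m) (h0 : z r ≤ v) :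
    ∃ q, r ≤ q ∧ q < m ∧ z q ≤ v ∧ ∀ p, q < p → p < m → v < z p := by
  induction m, hrm using Nat.le_induction with
  | base => exact ⟨r, le_refl _, by omega, h0, fun p a b => by omega⟩
  | succ k hk ih =>
    by_cases hz : z k ≤ v
    · exact ⟨k, by omega, by omega, hz, fun p a b => by omega⟩
    · obtain ⟨q, a, b, c, d⟩ := ih
      refine ⟨q, a, by omega, c, fun p u v' => ?_⟩
      by_cases hp : p = k
      · subst hp; omega
      · exact d p u (by omega)

theorem first_le (z : ℕ → ℤ) (v : ℤ) (hme : m ≤ e) (h0 : z e ≤ v) :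
    ∃ q, m ≤ q ∧ q ≤ e ∧ z q ≤ v ∧ ∀ p, m ≤ p → p < q → v < z p := by
  have hex : ∃ q, m ≤ q ∧ z q ≤ v := ⟨e, hme, h0⟩
  classical
  refine ⟨Nat.find hex, (Nat.find_spec hex).1, Nat.find_min' hex ⟨hme, h0⟩,
    (Nat.find_spec hex).2, fun p a b => ?_⟩
  have := Nat.find_min hex b
  by_contra hc
  exact this ⟨a, by omega⟩

theorem init_B (R : Row r e x y) (hm : r < m) (me : m ≤ e) (hx : x m = x (m-1) - 1)
    (hy : y m = y (m-1)) : ∃ q, TR r e m q x y ∨ TL r e m q x y := by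
  classical
  have hex : ∃ t : ℕ, ¬ (CL r m x y (t+1) ∧ CR e m x y (t+1)) := by
    refine ⟨(y m).toNat, fun hc => ?_⟩
    have := CL_bd R me hc.1
    omega
  have hspec := Nat.find_spec hex
  have hmin := fun k => Nat.find_min hex (m := k)
  generalize Nat.find hex = t at hspec hmin
  have hlow : ∀ s : ℤ, 1 ≤ s → s < t + 1 → CL r m x y s ∧ CR e m x y s := by
    intro s h1 h2
    have := hmin (s-1).toNat (by omega)
    have hs : (((s-1).toNat : ℕ) : ℤ) + 1 = s := by omega
    rw [hs] at this
    exact not_not.mp this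
  have hnnm := R.nn m (by omega) me
  by_cases hc : CL r m x y (t+1)
  · have hr : ¬ CR e m x y (t+1) := fun h => hspec ⟨hc, h⟩
    have hb := CL_bd R me hc
    obtain ⟨q, a, b, c, d⟩ := first_le (m := m) (e := e) y (y m - (t+1)) me (by rw [R.y1]; omega)
    have hqm : q ≠ m := by rintro rfl; omega
    have hst := R.st (q-1) (by omega) (by omega)
    have hd := d (q-1) (by omega) (by omega)
    rw [show q - 1 + 1 = q by omega] at hst
    refine ⟨q, Or.inl ⟨t+1, by omega, ?_, fun s u v => (hlow s u v).2, hr, by omega, b, by omega,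
      d⟩⟩
    intro s u v
    by_cases hs : s = t + 1
    · rw [hs]; exact hc
    · exact (hlow s u (by omega)).1
  · have hv : 0 ≤ x m - t := by
      by_cases ht : t = 0
      · subst ht; simp; omega
      · have := CR_bd R hm.le (hlow t (by omega) (by omega)).2
        omega
    obtain ⟨q, a, b, c, d⟩ := last_le (r := r) (m := m) x (x m - t) hm (by rw [R.x0]; omega)
    have hqm : q ≠ m - 1 := by rintro rfl; omega
    have hst := R.st q (by omega) (by omega)
    have hd := d (q+1) (by omega) (by omega)
    refine ⟨q, Or.inr ⟨t+1, by omega, fun s u v => (hlow s u v).1, fun s u v => (hlow s u v).2, hc,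
      a, b, by omega, fun p u v => ?_⟩⟩
    have := d p u v
    omega

theorem init_A (R : Row r e x y) (hm : r < m) (me : m ≤ e) (hx : x m = x (m-1) + 1)
    (hy : y m = y (m-1) + 1) : ∃ q, TA e m q x y := by
  have n1 := R.nn (m-1) (by omega) (by omega)
  obtain ⟨q, a, b, c, d⟩ := first_le (m := m) (e := e) x (x m - 1) me (by rw [R.x1]; omega)
  obtain ⟨q', a', b', c', d'⟩ := first_le (m := m) (e := e) y (y m - 1) me (by rw [R.y1]; omega)
  have hqm : q ≠ m := by rintro rfl; omega
  have hqm' : q' ≠ m := by rintro rfl; omega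
  have hst := R.st (q-1) (by omega) (by omega)
  have hd := d (q-1) (by omega) (by omega)
  rw [show q - 1 + 1 = q by omega] at hst
  have hst' := R.st (q'-1) (by omega) (by omega)
  have hd' := d' (q'-1) (by omega) (by omega)
  rw [show q' - 1 + 1 = q' by omega] at hst'
  by_cases hl : q ≤ q'
  · refine ⟨q, by omega, b, Or.inl (by omega), fun p u v => ?_⟩
    have := d p u v
    have := d' p u (by omega)
    omega
  · refine ⟨q', by omega, b', Or.inr (by omega), fun p u v => ?_⟩
    have := d p u (by omega)
    have := d' p u v
    omega

/-- invariant when the letter at `m` is an opener -/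
def IA (U : ℕ → Prop) (N r m : ℕ) (x y : ℕ → ℤ) : Prop :=
  x m = x (m-1) + 1 ∧ y m = y (m-1) + 1 ∧ ∃ q, TA (r+N) m q x y ∧ (q ≤ N ∨ U (q-N-1))

/-- invariant when the letter at `m` is a closer -/
def IB (U : ℕ → Prop) (N r m : ℕ) (x y : ℕ → ℤ) : Prop :=
  x m = x (m-1) - 1 ∧ y m = y (m-1) ∧
    ∃ q, (TR r (r+N) m q x y ∧ (q ≤ N ∨ U (q-N-1))) ∨ (TL r (r+N) m q x y ∧ U q)

theorem IA.symm {U : ℕ → Prop} (I : IA U N r m x y) : IA U N r m y x := by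
  obtain ⟨a, b, q, T, g⟩ := I
  exact ⟨b, a, q, TA_symm T, g⟩

theorem init_I {U : ℕ → Prop} (R : Row 0 N x y)
    (hU : ∀ p, x (p+1) = x p + 1 → y (p+1) = y p + 1 → U p)
    (hm : 0 < m) (me : m ≤ N) :
    IA U N 0 m x y ∨ IB U N 0 m x y ∨ IB U N 0 m y x := by
  have key : ∀ {x y : ℕ → ℤ}, Row 0 N x y → (∀ p, x (p+1) = x p + 1 → y (p+1) = y p + 1 → U p) →
      x m = x (m-1) - 1 → y m = y (m-1) → IB U N 0 m x y := by
    intro x y R hU a b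
    obtain ⟨q, hq⟩ := init_B R hm me a b
    refine ⟨a, b, q, ?_⟩
    rw [Nat.zero_add]
    rcases hq with T | T
    · left
      refine ⟨T, Or.inl ?_⟩
      obtain ⟨t, -, -, -, -, -, h, -⟩ := T
      exact h
    · right
      refine ⟨T, ?_⟩
      obtain ⟨t, t1, -, -, -, rq, qm, xq, fq⟩ := T
      have : q + 1 ≠ m := by
        rintro rfl
        simp at a
        omega
      have h1 := fq (q+1) (by omega) (by omega)
      have h2 := R.st q (by omega) (by omega)
      exact hU q (by omega) (by omega)
  have hst := R.st (m-1) (by omega) (by omega)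
  rw [show m - 1 + 1 = m by omega] at hst
  rcases hst with ⟨a, b⟩ | ⟨a, b⟩ | ⟨a, b⟩
  · left
    obtain ⟨q, T⟩ := init_A R hm me a b
    refine ⟨a, b, q, by rwa [Nat.zero_add], Or.inl T.2.1⟩
  · exact Or.inr (Or.inl (key R hU a b))
  · exact Or.inr (Or.inr (key R.symm (fun p u v => hU p v u) b a))

theorem step_A {U : ℕ → Prop} (R : Row r (r+N) x y) (H : Hit r (r+N) h x y x' y')
    (hm : r + 1 < m) (me : m ≤ r + N) (I : IA U N r m x y) : IA U N (r+1) m x' y' := by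
  obtain ⟨a, b, q, T, g⟩ := I
  have hne : h ≠ m := by
    rintro rfl
    have := H.yp
    omega
  have h3 := cA R H hm me a b T
  rw [show r + N + 1 = r + 1 + N by omega] at h3
  rcases lt_or_gt_of_ne hne with hh | hh
  · have := H.aft m (by omega) me
    have := H.aft (m-1) (by omega) (by omega)
    exact ⟨by omega, by omega, q, h3, g⟩
  · have := H.bef m (by omega) hh
    have := H.bef (m-1) (by omega) (by omega)
    exact ⟨by omega, by omega, q, h3, g⟩

theorem step_B {U : ℕ → Prop} (R : Row r (r+N) x y) (R' : Row (r+1) (r+1+N) x' y')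
    (H : Hit r (r+N) h x y x' y')
    (hm : r + 1 < m) (me : m ≤ r + N) (I : IB U N r m x y) :
    IA U N (r+1) m x' y' ∨ IB U N (r+1) m x' y' := by
  obtain ⟨a, b, q, T⟩ := I
  rw [show r + 1 + N = r + N + 1 by omega] at R'
  unfold IA IB
  rw [show r + 1 + N = r + N + 1 by omega]
  rcases lt_trichotomy h m with hh | hh | hh
  · right
    have := H.aft m (by omega) me
    have := H.aft (m-1) (by omega) (by omega)
    refine ⟨by omega, by omega, q, ?_⟩
    rcases T with ⟨T, g⟩ | ⟨T, g⟩
    · exact Or.inl ⟨c3_TR R H hh me T, g⟩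
    · exact Or.inr ⟨c3_TL R H hh me T, g⟩
  · left
    subst hh
    have := H.aft h (by omega) me
    have := H.bef (h-1) (by omega) (by omega)
    refine ⟨by omega, by omega, q, ?_⟩
    rcases T with ⟨T, g⟩ | ⟨T, g⟩
    · exact ⟨c5_TR R H T, g⟩
    · exact (c5_TL R H T).elim
  · right
    have := H.bef m (by omega) hh
    have := H.bef (m-1) (by omega) (by omega)
    refine ⟨by omega, by omega, q, ?_⟩
    rcases T with ⟨T, g⟩ | ⟨T, g⟩
    · exact Or.inl ⟨c1_TR R R' H hm hh T, g⟩
    · exact Or.inr ⟨c1_TL R H hm hh T, g⟩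

theorem step_C {U : ℕ → Prop} (R : Row r (r+N) x y) (R' : Row (r+1) (r+1+N) x' y')
    (H : Hit r (r+N) h y x y' x')
    (hm : r + 1 < m) (me : m ≤ r + N) (I : IB U N r m x y) :
    IB U N (r+1) m x' y' := by
  obtain ⟨a, b, q, T⟩ := I
  rw [show r + 1 + N = r + N + 1 by omega] at R'
  unfold IB
  have hne : h ≠ m := by
    rintro rfl
    have := H.yp
    omega
  rw [show r + 1 + N = r + N + 1 by omega]
  rcases lt_or_gt_of_ne hne with hh | hh
  · have := H.aft m (by omega) me
    have := H.aft (m-1) (by omega) (by omega)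
    rcases T with ⟨T, g⟩ | ⟨T, g⟩
    · exact ⟨by omega, by omega, q, Or.inl ⟨c4_TR R H hh me T, g⟩⟩
    · rcases c4_TL R R' H hh me T with T' | ⟨hq, T'⟩
      · exact ⟨by omega, by omega, q, Or.inr ⟨T', g⟩⟩
      · refine ⟨by omega, by omega, r + N + 1, Or.inl ⟨T', Or.inr ?_⟩⟩
        rw [show r + N + 1 - N - 1 = r by omega, ← hq]
        exact g
  · have := H.bef m (by omega) hh
    have := H.bef (m-1) (by omega) (by omega)
    refine ⟨by omega, by omega, q, ?_⟩
    rcases T with ⟨T, g⟩ | ⟨T, g⟩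
    · exact Or.inl ⟨c2_TR R H hm hh T, g⟩
    · exact Or.inr ⟨c2_TL R H hm hh T, g⟩

end

theorem rows_main (N : ℕ) (xs ys : ℕ → ℕ → ℤ) (hs : ℕ → ℕ) (U : ℕ → Prop)
    (hR : ∀ r, Row r (r+N) (xs r) (ys r))
    (hH : ∀ r, Hit r (r+N) (hs r) (xs r) (ys r) (xs (r+1)) (ys (r+1)) ∨
      Hit r (r+N) (hs r) (ys r) (xs r) (ys (r+1)) (xs (r+1)))
    (hU : ∀ p, xs 0 (p+1) = xs 0 p + 1 → ys 0 (p+1) = ys 0 p + 1 → U p)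
    (m : ℕ) (hm : 0 < m) (me : m ≤ N) : hs (m-1) ≤ N ∨ U (hs (m-1) - N - 1) := by
  have inv : ∀ r, r < m → IA U N r m (xs r) (ys r) ∨ IB U N r m (xs r) (ys r) ∨
      IB U N r m (ys r) (xs r) := by
    intro r
    induction r with
    | zero =>
      intro _
      have R0 := hR 0
      rw [Nat.zero_add] at R0
      exact init_I R0 hU hm me
    | succ r ih =>
      intro hr
      have R := hR r
      have R' := hR (r+1)
      rcases ih (by omega) with I | I | I
      · left
        rcases hH r with H | H
        · exact step_A R H hr (by omega) I
        · exact (step_A R.symm H hr (by omega) I.symm).symm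
      · rcases hH r with H | H
        · rcases step_B R R' H hr (by omega) I with J | J
          · exact Or.inl J
          · exact Or.inr (Or.inl J)
        · exact Or.inr (Or.inl (step_C R R' H hr (by omega) I))
      · rcases hH r with H | H
        · exact Or.inr (Or.inr (step_C R.symm R'.symm H hr (by omega) I))
        · rcases step_B R.symm R'.symm H hr (by omega) I with J | J
          · exact Or.inl J.symm
          · exact Or.inr (Or.inr J)
  have fin : ∀ {x y x' y' : ℕ → ℤ} {h : ℕ}, Row (m-1) (m-1+N) x y → Hit (m-1) (m-1+N) h x y x' y' →
      (IA U N (m-1) m x y ∨ IB U N (m-1) m x y ∨ IB U N (m-1) m y x) → 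
      h ≤ N ∨ U (h - N - 1) := by
    intro x y x' y' h R H I
    have xf := H.xf
    have yf := H.yf
    rw [show m - 1 + 1 = m by omega] at xf yf
    have h0 := R.x0
    have h1 := R.y0
    rcases I with I | I | I
    · obtain ⟨a, b, q, T, g⟩ := I
      have hq : q = h := by
        obtain ⟨mq, qe, dq, fq⟩ := T
        have hxh := H.xh
        have hh1 := H.h1
        rcases lt_trichotomy q h with hh | hh | hh
        · have := H.pos q (by omega) hh
          omega
        · exact hh
        · have := fq h (by omega) hh
          omega
      rw [← hq]; exact g
    · obtain ⟨a, b, -⟩ := I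
      omega
    · obtain ⟨a, b, -⟩ := I
      omega
  have I := inv (m-1) (by omega)
  rcases hH (m-1) with H | H
  · exact fin (hR _) H I
  · refine fin (hR _).symm H ?_
    rcases I with I | I | I
    · exact Or.inl I.symm
    · exact Or.inr (Or.inr I)
    · exact Or.inr (Or.inl I)

end KTrip

namespace KTrip

/-- contribution to (number of `A`) - (number of `B`) -/
def dx : KLetter → ℤ
  | A => 1
  | B => -1
  | C => 0

/-- contribution to (number of `A`) - (number of `C`) -/
def dy : KLetter → ℤ
  | A => 1
  | B => 0
  | C => -1

/-- height function of a word -/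
def S (d : KLetter → ℤ) (w : List KLetter) : ℕ → ℤ
  | 0 => 0
  | p + 1 => S d w p + d (w.getD p A)

theorem S_count (w : List KLetter) (p : ℕ) (hp : p ≤ w.length) :
    S dx w p = (w.take p).count A - (w.take p).count B ∧
    S dy w p = (w.take p).count A - (w.take p).count C := by
  induction p with
  | zero => simp [S]
  | succ p ih =>
    obtain ⟨i1, i2⟩ := ih (by omega)
    have hg : w.getD p A = w[p] := by simp [List.getD, List.getElem?_eq_getElem (show p < w.length by omega)]
    rw [S, S, i1, i2, hg, List.take_succ_eq_append_getElem (by omega)]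
    generalize w[p] = l
    cases l <;> simp [dx, dy, List.count_append] <;> omega

/-- the word conditions expressed by heights -/
structure Good (N : ℕ) (w : List KLetter) : Prop where
  pos : 0 < N
  len : w.length = N
  xN : S dx w N = 0
  yN : S dy w N = 0
  nn : ∀ p, p ≤ N → 0 ≤ S dx w p ∧ 0 ≤ S dy w p

theorem kiota_spec {N : ℕ} {w : List KLetter} (G : Good N w) :
    1 ≤ kiota w ∧ kiota w ≤ N ∧ (S dx w (kiota w) = 0 ∨ S dy w (kiota w) = 0) ∧
    ∀ p, 1 ≤ p → p < kiota w → 1 ≤ S dx w p ∧ 1 ≤ S dy w p := by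
  have hP : ∀ k, k ≤ N → ((decide (1 ≤ k) &&
      (((w.take k).count A == (w.take k).count B) ||
       ((w.take k).count A == (w.take k).count C))) = true ↔
       (1 ≤ k ∧ (S dx w k = 0 ∨ S dy w k = 0))) := by
    intro k hk
    obtain ⟨a, b⟩ := S_count w k (by rw [G.len]; exact hk)
    rw [a, b]
    simp
    intro _
    omega
  unfold kiota
  rw [List.headD_eq_head?_getD, List.head?_filter, G.len]
  rcases hf : List.find? (fun k => decide (1 ≤ k) &&
      (((w.take k).count A == (w.take k).count B) ||
       ((w.take k).count A == (w.take k).count C))) (List.range (N+1)) with _ | h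
  · rw [List.find?_eq_none] at hf
    exact absurd ((hP N le_rfl).2 ⟨G.pos, Or.inl G.xN⟩) (hf N (by simp))
  · rw [List.find?_range_eq_some] at hf
    obtain ⟨h1, h2, h3⟩ := hf
    simp only [Option.getD_some]
    have hN : h ≤ N := by
      rw [List.mem_range] at h2
      omega
    have := (hP h hN).1 h1
    refine ⟨this.1, hN, this.2, fun p a b => ?_⟩
    have h4 := h3 p b
    have h5 : ¬ (1 ≤ p ∧ (S dx w p = 0 ∨ S dy w p = 0)) := by
      rw [← hP p (by omega)]
      intro hc
      rw [hc] at h4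
      simp at h4
    have := G.nn p (by omega)
    omega

theorem Good.first {N : ℕ} {w : List KLetter} (G : Good N w) : w.getD 0 A = A := by
  have h := G.nn 1 G.pos
  simp only [S] at h
  rcases hl : w.getD 0 A with _ | _ | _
  · rfl
  · rw [hl] at h; simp [dx, dy] at h
  · rw [hl] at h; simp [dx, dy] at h

theorem Good.two_le {N : ℕ} {w : List KLetter} (G : Good N w) : 2 ≤ kiota w := by
  obtain ⟨a, b, c, d⟩ := kiota_spec G
  by_contra hc
  have : kiota w = 1 := by omega
  rw [this] at c
  simp only [S, G.first, dx, dy] at c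
  omega

theorem pro_getD {N : ℕ} {w : List KLetter} (hl : w.length = N) (h2 : 2 ≤ kiota w)
    (hN : kiota w ≤ N) (p : ℕ) :
    (p + 1 < N → (pro w).getD p A = if p + 2 = kiota w then A else w.getD (p+1) A) ∧
    (p + 1 = N → (pro w).getD p A = w.getD (kiota w - 1) A) := by
  unfold pro
  generalize w.getD (kiota w - 1) A = l
  constructor
  · intro hp
    rw [List.getD_append _ _ _ _ (by simp; omega)]
    simp only [List.getD, List.getElem?_set, List.getElem?_drop, List.length_drop]
    by_cases h : p + 2 = kiota w
    · rw [if_pos (by omega), if_pos (by omega), if_pos h]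
      rfl
    · rw [if_neg (by omega), if_neg h, Nat.add_comm]
  · intro hp
    rw [List.getD_append_right _ _ _ _ (by simp; omega)]
    simp
    rw [show p - (w.length - 1) = 0 by omega]
    rfl

theorem pro_length {w : List KLetter} (hw : 0 < w.length) : (pro w).length = w.length := by
  simp [pro]
  omega

theorem S_pro {N : ℕ} {w : List KLetter} (G : Good N w) (d : KLetter → ℤ) (dA : d A = 1) (p : ℕ) :
    (p < N → S d (pro w) p = if p + 1 < kiota w then S d w (p+1) - 1 else
      S d w (p+1) - d (w.getD (kiota w - 1) A)) := by
  obtain ⟨a, b, c, -⟩ := kiota_spec G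
  have h2 := G.two_le
  induction p with
  | zero =>
    intro _
    rw [if_pos (by omega)]
    simp only [S, G.first, dA]
    omega
  | succ p ih =>
    intro hp
    have hl := (pro_getD G.len h2 b p).1 hp
    have e2 : S d w (p+1+1) = S d w (p+1) + d (w.getD (p+1) A) := rfl
    rw [S, ih (by omega), hl, e2]
    by_cases h : p + 2 = kiota w
    · rw [if_pos h, if_pos (by omega), if_neg (by omega), dA, ← h,
        show p + 2 - 1 = p + 1 by omega]
      omega
    · rw [if_neg h]
      by_cases h' : p + 1 < kiota w
      · rw [if_pos h', if_pos (by omega)]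
        ring
      · rw [if_neg h', if_neg (by omega)]
        ring

theorem S_pro_N {N : ℕ} {w : List KLetter} (G : Good N w) (d : KLetter → ℤ) (dA : d A = 1) :
    S d (pro w) N = S d w N := by
  obtain ⟨a, b, c, -⟩ := kiota_spec G
  have h2 := G.two_le
  obtain ⟨M, rfl⟩ : ∃ M, N = M + 1 := ⟨N - 1, by omega⟩
  have hl := (pro_getD G.len h2 b M).2 rfl
  conv_lhs => rw [S]
  rw [S_pro G d dA M (by omega), if_neg (by omega), hl]
  ring

theorem closer {N : ℕ} {w : List KLetter} (G : Good N w) :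
    (w.getD (kiota w - 1) A = B ∧ S dx w (kiota w) = 0) ∨
    (w.getD (kiota w - 1) A = C ∧ S dy w (kiota w) = 0) := by
  obtain ⟨a, b, c, d⟩ := kiota_spec G
  have h2 := G.two_le
  have hd := d (kiota w - 1) (by omega) (by omega)
  obtain ⟨k, hk⟩ : ∃ k, kiota w = k + 1 := ⟨kiota w - 1, by omega⟩
  rw [hk] at c hd ⊢
  simp only [Nat.add_sub_cancel, S] at *
  rcases hl : w.getD k A with _ | _ | _ <;> rw [hl] at c <;> simp [dx, dy] at c ⊢ <;> omega

theorem Good.pro {N : ℕ} {w : List KLetter} (G : Good N w) : Good N (pro w) := by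
  obtain ⟨a, b, c, d⟩ := kiota_spec G
  have h2 := G.two_le
  refine ⟨G.pos, by rw [pro_length (by rw [G.len]; exact G.pos), G.len], ?_, ?_, ?_⟩
  · rw [S_pro_N G dx rfl, G.xN]
  · rw [S_pro_N G dy rfl, G.yN]
  · intro p hp
    rcases Nat.lt_or_eq_of_le hp with hp | hp
    · rw [S_pro G dx rfl p hp, S_pro G dy rfl p hp]
      have hn := G.nn (p+1) (by omega)
      by_cases h : p + 1 < kiota w
      · have := d (p+1) (by omega) h
        rw [if_pos h, if_pos h]
        omega
      · rw [if_neg h, if_neg h]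
        rcases closer G with ⟨e, -⟩ | ⟨e, -⟩ <;> rw [e] <;> simp only [dx, dy] <;> omega
    · subst hp
      rw [S_pro_N G dx rfl, S_pro_N G dy rfl, G.xN, G.yN]
      simp

theorem Good.row {N : ℕ} {w : List KLetter} (G : Good N w) (r : ℕ) :
    Row r (r+N) (fun p => S dx w (p-r)) (fun p => S dy w (p-r)) := by
  refine ⟨?_, ?_, ?_, ?_, ?_, ?_⟩
  · simp [S]
  · simp [S]
  · simp [G.xN]
  · simp [G.yN]
  · intro p a b
    exact G.nn (p-r) (by omega)
  · intro p a b
    have e1 : S dx w (p+1-r) = S dx w (p-r) + dx (w.getD (p-r) A) := by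
      rw [show p + 1 - r = (p - r) + 1 by omega, S]
    have e2 : S dy w (p+1-r) = S dy w (p-r) + dy (w.getD (p-r) A) := by
      rw [show p + 1 - r = (p - r) + 1 by omega, S]
    rw [e1, e2]
    generalize w.getD (p-r) A = l
    rcases l with _ | _ | _ 
    · left; exact ⟨rfl, rfl⟩
    · right; left; exact ⟨rfl, by simp [dy]⟩
    · right; right; exact ⟨by simp [dx], rfl⟩

theorem hit_aux {N : ℕ} {w : List KLetter} (G : Good N w) (r : ℕ) (d d' : KLetter → ℤ)
    (dA : d A = 1) (dA' : d' A = 1)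
    (hc : d (w.getD (kiota w - 1) A) = -1) (hc' : d' (w.getD (kiota w - 1) A) = 0)
    (hz : S d w (kiota w) = 0) (hN : S d w N = 0) (hN' : S d' w N = 0)
    (hp : ∀ p, 1 ≤ p → p < kiota w → 1 ≤ S d w p ∧ 1 ≤ S d' w p) :
    Hit r (r+N) (r + kiota w) (fun p => S d w (p-r)) (fun p => S d' w (p-r))
      (fun p => S d (pro w) (p-(r+1))) (fun p => S d' (pro w) (p-(r+1))) := by
  obtain ⟨a, b, -, -⟩ := kiota_spec G
  have h2 := G.two_le
  have e1 : S d w (kiota w) = S d w (kiota w - 1) + -1 := by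
    conv_lhs => rw [show kiota w = kiota w - 1 + 1 by omega, S, hc]
  have e2 : S d' w (kiota w) = S d' w (kiota w - 1) + 0 := by
    conv_lhs => rw [show kiota w = kiota w - 1 + 1 by omega, S, hc']
  have e3 := hp (kiota w - 1) (by omega) (by omega)
  refine ⟨by omega, by omega, ?_, ?_, ?_, ?_, ?_, ?_, ?_, ?_, ?_, ?_, ?_⟩
  · simpa using hz
  · simp only [Nat.add_sub_cancel_left]; omega
  · rw [show r + kiota w - 1 - r = kiota w - 1 by omega]; omega
  · rw [show r + kiota w - 1 - r = kiota w - 1 by omega, Nat.add_sub_cancel_left]; omega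
  · intro p u v
    exact hp (p-r) (by omega) (by omega)
  · intro p u v
    rw [S_pro G d dA _ (by omega), S_pro G d' dA' _ (by omega), if_pos (by omega), if_pos (by omega),
      show p - (r+1) + 1 = p - r by omega]
    simp
  · intro p u v
    rw [S_pro G d dA _ (by omega), S_pro G d' dA' _ (by omega), if_neg (by omega), if_neg (by omega),
      show p - (r+1) + 1 = p - r by omega, hc, hc']
    simp
  · rw [show r + N + 1 - (r+1) = N by omega, S_pro_N G d dA, hN]
  · rw [show r + N + 1 - (r+1) = N by omega, S_pro_N G d' dA', hN']
  · simp only [Nat.add_sub_cancel_left, S, G.first, dA]; rfl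
  · simp only [Nat.add_sub_cancel_left, S, G.first, dA']; rfl

theorem Good.hit {N : ℕ} {w : List KLetter} (G : Good N w) (r : ℕ) :
    Hit r (r+N) (r + kiota w) (fun p => S dx w (p-r)) (fun p => S dy w (p-r))
      (fun p => S dx (_root_.pro w) (p-(r+1))) (fun p => S dy (_root_.pro w) (p-(r+1))) ∨
    Hit r (r+N) (r + kiota w) (fun p => S dy w (p-r)) (fun p => S dx w (p-r))
      (fun p => S dy (_root_.pro w) (p-(r+1))) (fun p => S dx (_root_.pro w) (p-(r+1))) := by
  obtain ⟨a, b, c, d⟩ := kiota_spec G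
  rcases closer G with ⟨e, z⟩ | ⟨e, z⟩
  · exact Or.inl (hit_aux G r dx dy rfl rfl (by rw [e]; rfl) (by rw [e]; rfl) z G.xN G.yN d)
  · exact Or.inr (hit_aux G r dy dx rfl rfl (by rw [e]; rfl) (by rw [e]; rfl) z G.yN G.xN
      (fun p u v => (d p u v).symm))

theorem Good.iter {N : ℕ} {w : List KLetter} (G : Good N w) (r : ℕ) :
    Good N (_root_.pro^[r] w) := by
  induction r with
  | zero => exact G
  | succ r ih => rw [Function.iterate_succ_apply']; exact ih.pro

theorem word_main {N : ℕ} {w : List KLetter} (G : Good N w) (j : ℕ) (hj : 0 < j) (hN : j ≤ N) :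
    j - 1 + kiota (pro^[j-1] w) ≤ N ∨ w.getD (j - 1 + kiota (pro^[j-1] w) - N - 1) A = A := by
  refine rows_main N (fun r p => S dx (pro^[r] w) (p-r)) (fun r p => S dy (pro^[r] w) (p-r))
    (fun r => r + kiota (pro^[r] w)) (fun p => w.getD p A = A) (fun r => (G.iter r).row r)
    (fun r => ?_) ?_ j hj hN
  · have := (G.iter r).hit r
    simp only [Function.iterate_succ_apply']
    exact this
  · intro p h1 h2
    simp only [Function.iterate_zero, id, Nat.sub_zero, S] at h1 h2
    show w.getD p A = A
    rcases hl : w.getD p A with _ | _ | _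
    · rfl
    · rw [hl] at h1 h2; simp [dx, dy] at h1 h2
    · rw [hl] at h1 h2; simp [dx, dy] at h1 h2

theorem iter_letter {N : ℕ} {w : List KLetter} (G : Good N w) (r p : ℕ) (hp : p + r < N) :
    (pro^[r] w).getD p A = A ∨ (pro^[r] w).getD p A = w.getD (p+r) A := by
  induction r generalizing p with
  | zero => right; rfl
  | succ r ih =>
    rw [Function.iterate_succ_apply']
    have G' := G.iter r
    rw [(pro_getD G'.len G'.two_le (kiota_spec G').2.1 p).1 (by omega)]
    split_ifs
    · left; rfl
    · rw [show p + (r+1) = p + 1 + r by omega]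
      exact ih (p+1) (by omega)

theorem Good.of_kreweras {n : ℕ} {w : List KLetter} (hn : 0 < n) (hw : IsKrewerasWord n w) :
    Good (3*n) w := by
  obtain ⟨hl, hA, hB, hC, hk⟩ := hw
  have hN := S_count w (3*n) (by omega)
  rw [← hl, List.take_length, hA, hB, hC] at hN
  refine ⟨by omega, hl, by rw [← hl, hN.1]; omega, by rw [← hl, hN.2]; omega, fun p hp => ?_⟩
  obtain ⟨a, b⟩ := S_count w p (by omega)
  have := hk p
  rw [a, b]
  omega

end KTrip

/-- The pair `(σ_w, ε_w)` determines `w`: for `i ∈ {1, …, 3n}`, with `j = σ_w⁻¹(i)`,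
we have `w_i = A` if `j > i`, and `w_i = ε_w(j)` if `j < i` (letters are 1-indexed). -/
theorem ksigma_keps_determine_word (n : ℕ) (w : List KLetter)
    (hw : IsKrewerasWord n w) :
    ∀ i j : ℕ, 1 ≤ i → i ≤ 3 * n → 1 ≤ j → j ≤ 3 * n → ksigma n w j = i →
      ((i < j → w.getD (i - 1) KLetter.A = KLetter.A) ∧
        (j < i → w.getD (i - 1) KLetter.A = keps w j)) := by
  intro i j hi1 hi2 hj1 hj2 hs
  have G := KTrip.Good.of_kreweras (by omega) hw
  have G' := G.iter (j-1)
  have k2 := G'.two_le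
  obtain ⟨-, k3, -, -⟩ := KTrip.kiota_spec G'
  have hm := KTrip.word_main G j hj1 hj2
  have hcl := KTrip.closer G'
  have hlet := KTrip.iter_letter G (j-1) (kiota (pro^[j-1] w) - 1)
  unfold keps
  unfold ksigma at hs
  generalize kiota (pro^[j-1] w) = k at *
  generalize 3 * n = N at *
  by_cases hlt : k + j - 2 < N
  · rw [Nat.mod_eq_of_lt hlt] at hs
    refine ⟨fun h => by omega, fun _ => ?_⟩
    rw [show k - 1 + (j-1) = i - 1 by omega] at hlet
    rcases hlet (by omega) with h | h
    · rw [h] at hcl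
      simp at hcl
    · exact h.symm
  · have : (k + j - 2) % N = k + j - 2 - N := by
      rw [Nat.mod_eq_sub_mod (by omega), Nat.mod_eq_of_lt (by omega)]
    rw [this] at hs
    refine ⟨fun _ => ?_, fun h => by omega⟩
    rcases hm with h | h
    · omega
    · rw [show j - 1 + k - N - 1 = i - 1 by omega] at h
      exact h
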